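/- arXiv:1905.07294 — 2 statements merged into one kernel-verified Lean document; each statement's English description precedes it below -/
import Mathlib

section
/- Let κ = e₁ ∈ S² and let φ ∈ C¹(S²; ℝ) be supported in {q ∈ S² : q·e₁ ≥ 0}. Then (2πi)^{-1} ∫_{S²} N e^{i(1 − q·e₁)N} φ(q) dS(q) → φ(e₁) as N → ∞. -/
open MeasureTheory Real Filter Metric
open scoped RealInnerProductSpace Topology
noncomputable section

abbrev E3 := EuclideanSpace ℝ (Fin 3)

def SC (p : ℝ × ℝ) : E3 := !₂[cos p.2, sin p.2 * cos p.1, sin p.2 * sin p.1]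

lemma contDiff_SC : ContDiff ℝ 1 SC := by
  unfold SC
  rw [contDiff_euclidean]
  intro i
  fin_cases i <;> simp <;> fun_prop

lemma norm_SC (p : ℝ × ℝ) : ‖SC p‖ = 1 := by
  rw [EuclideanSpace.norm_eq, Real.sqrt_eq_one]
  simp [SC, Fin.sum_univ_three]
  nlinarith [sin_sq_add_cos_sq p.1, sin_sq_add_cos_sq p.2]

lemma cont_mk3 : Continuous (fun x : ℝ × ℝ × ℝ => (!₂[x.1, x.2.1, x.2.2] : E3)) := by
  apply (PiLp.continuous_toLp 2 _).comp
  rw [continuous_pi_iff]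
  intro i
  fin_cases i <;> simp <;> fun_prop

lemma lint_coords (G : E3 → ENNReal) (hG : Measurable G) :
    ∫⁻ x, G x = ∫⁻ a : ℝ, ∫⁻ p : ℝ × ℝ, G !₂[a, p.1, p.2] := by
  have h1 := (PiLp.volume_preserving_toLp (Fin 3))
  have h2 := (volume_preserving_piFinSuccAbove (fun _ : Fin 3 => ℝ) 0).symm
  have h3 : MeasurePreserving (MeasurableEquiv.prodCongr (MeasurableEquiv.refl ℝ) (MeasurableEquiv.finTwoArrow (α := ℝ)).symm) (volume : Measure (ℝ × (ℝ × ℝ))) (volume : Measure (ℝ × (Fin 2 → ℝ))) := (MeasurePreserving.id _).prod (volume_preserving_finTwoArrow ℝ).symm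
  have h4 := (h1.comp h2).comp h3
  have : (fun x : ℝ × ℝ × ℝ => (!₂[x.1, x.2.1, x.2.2] : E3)) = ((WithLp.toLp 2 : (Fin 3 → ℝ) → E3) ∘ (MeasurableEquiv.piFinSuccAbove (fun _ : Fin 3 => ℝ) 0).symm) ∘ (MeasurableEquiv.prodCongr (MeasurableEquiv.refl ℝ) (MeasurableEquiv.finTwoArrow (α := ℝ)).symm) := by
    funext x
    ext i
    fin_cases i <;> rfl
  rw [← this] at h4
  rw [← h4.lintegral_comp hG, Measure.volume_eq_prod, lintegral_prod]
  exact (hG.comp cont_mk3.measurable).aemeasurable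

lemma lint_sph (G : E3 → ENNReal) (hG : Measurable G) :
    ∫⁻ x, G x = ∫⁻ w in Set.Ioo (-π) π, ∫⁻ p in Set.Ioi (0:ℝ) ×ˢ Set.Ioo 0 π,
      ENNReal.ofReal (p.1 ^ 2 * sin p.2) * G (p.1 • SC (w, p.2)) := by
  rw [lint_coords G hG]
  have hm : Measurable (fun x : ℝ × ℝ × ℝ => G !₂[x.1, x.2.1, x.2.2]) :=
    hG.comp cont_mk3.measurable
  have e1 : ∀ a : ℝ, ∫⁻ p : ℝ × ℝ, G !₂[a, p.1, p.2] = ∫⁻ w in Set.Ioo (-π) π,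
      ∫⁻ ρ in Set.Ioi (0:ℝ), ENNReal.ofReal ρ * G !₂[a, ρ * cos w, ρ * sin w] := by
    intro a
    rw [← lintegral_comp_polarCoord_symm, polarCoord_target, Measure.volume_eq_prod,
      ← Measure.prod_restrict, lintegral_prod_symm]
    · simp
    · apply Measurable.aemeasurable
      simp only [polarCoord_symm_apply, smul_eq_mul]
      exact (by fun_prop : Measurable fun p : ℝ × ℝ => ENNReal.ofReal p.1).mul
        (hm.comp (by fun_prop : Measurable fun p : ℝ × ℝ => (a, p.1 * cos p.2, p.1 * sin p.2)))
  simp_rw [e1]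
  have hm2 : Measurable (fun x : (ℝ × ℝ) × ℝ => ENNReal.ofReal x.2 * G !₂[x.1.1, x.2 * cos x.1.2, x.2 * sin x.1.2]) :=
    (by fun_prop : Measurable fun x : (ℝ × ℝ) × ℝ => ENNReal.ofReal x.2).mul
      (hm.comp (by fun_prop : Measurable fun x : (ℝ × ℝ) × ℝ => (x.1.1, x.2 * cos x.1.2, x.2 * sin x.1.2)))
  rw [lintegral_lintegral_swap (f := fun a w => ∫⁻ ρ in Set.Ioi (0:ℝ), ENNReal.ofReal ρ * G !₂[a, ρ * cos w, ρ * sin w])]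
  swap
  · exact (Measurable.lintegral_prod_right' hm2).aemeasurable
  refine lintegral_congr fun w => ?_
  have hm3 : Measurable (fun x : ℝ × ℝ => (Set.Ioi (0:ℝ)).indicator (fun ρ => ENNReal.ofReal ρ * G !₂[x.1, ρ * cos w, ρ * sin w]) x.2) := by
    have := (hm2.comp (by fun_prop : Measurable fun x : ℝ × ℝ => ((x.1, w), x.2))).indicator
      (measurable_snd measurableSet_Ioi : MeasurableSet {x : ℝ × ℝ | x.2 ∈ Set.Ioi 0})
    exact this
  simp_rw [← lintegral_indicator measurableSet_Ioi]
  rw [← lintegral_prod (fun x : ℝ × ℝ => (Set.Ioi (0:ℝ)).indicator (fun ρ => ENNReal.ofReal ρ * G !₂[x.1, ρ * cos w, ρ * sin w]) x.2) hm3.aemeasurable,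
    ← Measure.volume_eq_prod,
    ← lintegral_comp_polarCoord_symm, polarCoord_target,
    ← lintegral_indicator (by measurability), ← lintegral_indicator (by measurability)]
  refine lintegral_congr fun p => ?_
  obtain ⟨r, α⟩ := p
  by_cases hr : 0 < r
  swap
  · simp [Set.indicator, hr]
  by_cases hα : α ∈ Set.Ioo (-π) π
  swap
  · have : ¬ (0 < α ∧ α < π) := fun h => hα ⟨by linarith [pi_pos], h.2⟩
    have h2 : ¬ (-π < α ∧ α < π) := fun h => hα h
    simp [Set.indicator, this, h2]
  by_cases h0 : 0 < α
  · have hs : 0 < sin α := sin_pos_of_pos_of_lt_pi h0 hα.2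
    have h2 : (-π < α ∧ α < π) := hα
    simp [Set.indicator, hr, h0, h2, mul_pos hr hs]
    rw [← mul_assoc, ← ENNReal.ofReal_mul hr.le]
    congr 2
    · ring
    · ext i
      fin_cases i <;> simp [SC] <;> ring
  · have hs : sin α ≤ 0 := sin_nonpos_of_nonpos_of_neg_pi_le (not_lt.1 h0) hα.1.le
    have : ¬ 0 < r * sin α := by nlinarith
    simp [Set.indicator, h0, this]

def nuS : Measure (ℝ × ℝ) :=
  ((volume : Measure (ℝ × ℝ)).restrict (Set.Ioo (-π) π ×ˢ Set.Ioo 0 π)).withDensity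
    (fun p => ENNReal.ofReal (sin p.2))

lemma lint_r2 : ∫⁻ r in Set.Ioi (0:ℝ), ENNReal.ofReal (r^2) * (Set.Iio (1:ℝ)).indicator 1 r
    = ENNReal.ofReal (1/3) := by
  have : ∀ r : ℝ, ENNReal.ofReal (r^2) * (Set.Iio (1:ℝ)).indicator 1 r = (Set.Iio (1:ℝ)).indicator (fun r => ENNReal.ofReal (r^2)) r := by
    intro r; by_cases h : r < 1 <;> simp [Set.indicator, h]
  simp_rw [this]
  rw [lintegral_indicator measurableSet_Iio, Measure.restrict_restrict measurableSet_Iio,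
    Set.inter_comm, Set.Ioi_inter_Iio, ← ofReal_integral_eq_lintegral_ofReal]
  · rw [← integral_Ioc_eq_integral_Ioo, ← intervalIntegral.integral_of_le (by norm_num)]
    norm_num
  · exact ((continuous_pow 2).integrableOn_Icc).mono_set Set.Ioo_subset_Icc_self
  · exact Eventually.of_forall fun x => by positivity

open scoped Pointwise in
lemma map_toSphere :
    (Measure.toSphere (volume : Measure E3)).map Subtype.val = nuS.map SC := by
  have hSC : Measurable SC := contDiff_SC.continuous.measurable
  ext A hA
  rw [Measure.map_apply measurable_subtype_coe hA, Measure.map_apply hSC hA,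
    Measure.toSphere_apply' _ (measurable_subtype_coe hA)]
  have hB : Set.Ioo (0:ℝ) 1 • (Subtype.val '' ((Subtype.val : sphere (0:E3) 1 → E3) ⁻¹' A))
      = {x | 0 < ‖x‖ ∧ ‖x‖ < 1 ∧ ‖x‖⁻¹ • x ∈ A} := by
    ext x
    simp only [Set.mem_smul, Set.mem_image, Set.mem_preimage, Set.mem_ofPred_eq]
    constructor
    · rintro ⟨r, hr, _, ⟨q, hq, rfl⟩, rfl⟩
      have hn : ‖r • (q : E3)‖ = r := by
        rw [norm_smul, norm_eq_of_mem_sphere, mul_one, Real.norm_of_nonneg hr.1.le]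
      rw [hn, smul_smul, inv_mul_cancel₀ hr.1.ne', one_smul]
      exact ⟨hr.1, hr.2, hq⟩
    · rintro ⟨h0, h1, h2⟩
      refine ⟨‖x‖, ⟨h0, h1⟩, ‖x‖⁻¹ • x, ⟨⟨‖x‖⁻¹ • x, ?_⟩, h2, rfl⟩, ?_⟩
      · simp [norm_smul, h0.ne']
      · rw [smul_smul, mul_inv_cancel₀ h0.ne', one_smul]
  rw [hB]
  have hBm : MeasurableSet {x : E3 | 0 < ‖x‖ ∧ ‖x‖ < 1 ∧ ‖x‖⁻¹ • x ∈ A} := by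
    refine (measurableSet_lt measurable_const measurable_norm).inter
      ((measurableSet_lt measurable_norm measurable_const).inter ?_)
    exact (by fun_prop : Measurable fun x : E3 => ‖x‖⁻¹ • x) hA
  rw [← lintegral_indicator_one hBm, lint_sph _ (measurable_one.indicator hBm)]
  have key : ∀ w : ℝ, ∫⁻ p in Set.Ioi (0:ℝ) ×ˢ Set.Ioo 0 π,
      ENNReal.ofReal (p.1 ^ 2 * sin p.2) * ({x : E3 | 0 < ‖x‖ ∧ ‖x‖ < 1 ∧ ‖x‖⁻¹ • x ∈ A}).indicator 1 (p.1 • SC (w, p.2))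
      = ENNReal.ofReal (1/3) * ∫⁻ α in Set.Ioo 0 π, ENNReal.ofReal (sin α) * A.indicator 1 (SC (w, α)) := by
    intro w
    rw [← lint_r2, ← lintegral_prod_mul, Measure.prod_restrict, ← Measure.volume_eq_prod]
    · refine setLIntegral_congr_fun (by measurability) fun p hp => ?_
      obtain ⟨r, α⟩ := p
      have hr : 0 < r := hp.1
      have hn : ‖r • SC (w, α)‖ = r := by
        rw [norm_smul, norm_SC, mul_one, Real.norm_of_nonneg hr.le]
      have : (r • SC (w, α) ∈ {x : E3 | 0 < ‖x‖ ∧ ‖x‖ < 1 ∧ ‖x‖⁻¹ • x ∈ A}) ↔ r < 1 ∧ SC (w, α) ∈ A := by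
        rw [Set.mem_ofPred_eq, hn, smul_smul, inv_mul_cancel₀ hr.ne', one_smul]
        tauto
      generalize {x : E3 | 0 < ‖x‖ ∧ ‖x‖ < 1 ∧ ‖x‖⁻¹ • x ∈ A} = B at this ⊢
      simp only [ENNReal.ofReal_mul (sq_nonneg r)]
      by_cases h1 : r < 1 <;> by_cases h2 : SC (w, α) ∈ A <;> simp [Set.indicator, this, h1, h2]
    · exact ((by fun_prop : Measurable fun r : ℝ => ENNReal.ofReal (r^2)).mul (measurable_one.indicator measurableSet_Iio)).aemeasurable
    · exact ((by fun_prop : Measurable fun r : ℝ => ENNReal.ofReal (sin r)).mul ((measurable_one.indicator hA).comp (hSC.comp (by fun_prop)))).aemeasurable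
  simp_rw [key]
  rw [lintegral_const_mul' _ _ ENNReal.ofReal_ne_top, ← mul_assoc]
  have : ((Module.finrank ℝ E3 : ℕ) : ENNReal) * ENNReal.ofReal (1/3) = 1 := by
    rw [finrank_euclideanSpace_fin, ← ENNReal.ofReal_natCast, ← ENNReal.ofReal_mul (by positivity)]
    norm_num
  rw [this, one_mul, nuS, withDensity_apply _ (hSC hA), ← lintegral_indicator (hSC hA),
    Measure.volume_eq_prod, ← Measure.prod_restrict, lintegral_prod]
  · refine lintegral_congr fun w => lintegral_congr fun α => ?_
    by_cases h2 : SC (w, α) ∈ A <;> simp [Set.indicator, h2]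
  · exact ((by fun_prop : Measurable fun p : ℝ × ℝ => ENNReal.ofReal (sin p.2)).indicator (hSC hA)).aemeasurable

lemma integral_toSphere (g : E3 → ℂ) (hg : Continuous g) :
    ∫ q : sphere (0:E3) 1, g q ∂(Measure.toSphere (volume : Measure E3))
     = ∫ w in (-π)..π, ∫ α in (0:ℝ)..π, (sin α : ℂ) * g (SC (w, α)) := by
  have hSC : Continuous SC := contDiff_SC.continuous
  rw [← integral_map (f := g) measurable_subtype_coe.aemeasurable hg.aestronglyMeasurable,
    map_toSphere, integral_map hSC.measurable.aemeasurable hg.aestronglyMeasurable, nuS,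
    integral_withDensity_eq_integral_toReal_smul (by fun_prop) (by simp)]
  have hc : Continuous fun p : ℝ × ℝ => (sin p.2 : ℂ) * g (SC p) := by fun_prop
  have : ∫ p in Set.Ioo (-π) π ×ˢ Set.Ioo 0 π, (ENNReal.ofReal (sin p.2)).toReal • g (SC p)
      = ∫ p in Set.Ioo (-π) π ×ˢ Set.Ioo 0 π, (sin p.2 : ℂ) * g (SC p) := by
    refine setIntegral_congr_fun (by measurability) fun p hp => ?_
    have : 0 ≤ sin p.2 := (sin_pos_of_mem_Ioo hp.2).le
    simp [ENNReal.toReal_ofReal this]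
  rw [this, Measure.volume_eq_prod, setIntegral_prod]
  · rw [intervalIntegral.integral_of_le (by linarith [pi_pos]), integral_Ioc_eq_integral_Ioo]
    simp_rw [intervalIntegral.integral_of_le pi_pos.le, integral_Ioc_eq_integral_Ioo]
  · exact (hc.continuousOn.integrableOn_compact (isCompact_Icc.prod isCompact_Icc)).mono_set
      (Set.prod_mono Set.Ioo_subset_Icc_self Set.Ioo_subset_Icc_self)

lemma RL_cos (h : ℝ → ℂ) :
    Tendsto (fun N : ℝ => ∫ α in (0:ℝ)..(π/2), Complex.exp (Complex.I * ((1 - cos α : ℝ) : ℂ) * N) * h α)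
      atTop (𝓝 0) := by
  let M : Set ℝ := cos '' Set.Ioo 0 (π/2)
  let f : ℝ → ℂ := fun t => (((sin (arccos t))⁻¹ : ℝ) : ℂ) * h (arccos t)
  have hinj : Set.InjOn cos (Set.Ioo 0 (π/2)) := by
    refine injOn_cos.mono fun x hx => ?_
    exact ⟨hx.1.le, by linarith [hx.2, pi_pos]⟩
  have hMm : MeasurableSet M := measurableSet_Ioo.image_of_continuousOn_injOn
    continuous_cos.continuousOn hinj
  have key := Real.tendsto_integral_exp_smul_cocompact (M.indicator f)
  have hN : Tendsto (fun N : ℝ => N / (2 * π)) atTop (cocompact ℝ) :=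
    (tendsto_id.atTop_div_const (by positivity)).mono_right atTop_le_cocompact
  have key2 := key.comp hN
  rw [tendsto_zero_iff_norm_tendsto_zero] at key2 ⊢
  refine key2.congr fun N => ?_
  have h1 : ∫ v : ℝ, Real.fourierChar (-(v * (N / (2 * π)))) • M.indicator f v
      = ∫ v in M, Complex.exp (- (Complex.I * v * N)) * f v := by
    rw [← integral_indicator hMm]
    congr 1
    funext v
    by_cases hv : v ∈ M
    · simp only [Set.indicator_of_mem hv, Circle.smul_def, Real.fourierChar_apply, smul_eq_mul]
      congr 2
      have : (π : ℂ) ≠ 0 := by exact_mod_cast pi_ne_zero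
      push_cast
      field_simp
    · simp [Set.indicator_of_notMem hv]
  simp only [Function.comp]
  rw [h1, integral_image_eq_integral_abs_deriv_smul measurableSet_Ioo
    (fun x _ => (hasDerivAt_cos x).hasDerivWithinAt) hinj,
    intervalIntegral.integral_of_le (by positivity), integral_Ioc_eq_integral_Ioo]
  have h2 : ∫ α in Set.Ioo 0 (π/2), Complex.exp (Complex.I * ((1 - cos α : ℝ) : ℂ) * N) * h α
     = Complex.exp ((N : ℝ) * Complex.I) * ∫ x in Set.Ioo 0 (π/2), |-sin x| • (Complex.exp (- (Complex.I * (cos x : ℝ) * N)) * f (cos x)) := by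
    rw [← integral_const_mul]
    refine setIntegral_congr_fun measurableSet_Ioo fun x hx => ?_
    have hs : 0 < sin x := sin_pos_of_pos_of_lt_pi hx.1 (by linarith [hx.2, pi_pos])
    have hs' : ((sin x : ℝ) : ℂ) ≠ 0 := by exact_mod_cast hs.ne'
    have ha : arccos (cos x) = x := arccos_cos hx.1.le (by linarith [hx.2, pi_pos])
    simp only [f, ha, abs_neg, abs_of_pos hs, Complex.real_smul]
    rw [show Complex.I * ((1 - cos x : ℝ) : ℂ) * N = (N : ℝ) * Complex.I + - (Complex.I * (cos x : ℝ) * N) by push_cast; ring, Complex.exp_add]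
    push_cast at hs' ⊢
    field_simp
  rw [h2, norm_mul, Complex.norm_exp_ofReal_mul_I, one_mul]

lemma by_parts (G D : ℝ → ℝ) (hG : ∀ α, HasDerivAt G (D α) α) (hD : Continuous D)
    (h0 : ∀ α ∈ Set.Icc (π/2) π, G α = 0) (N : ℝ) :
    ∫ α in (0:ℝ)..π, (sin α : ℂ) * ((N : ℂ) * Complex.exp (Complex.I * ((1 - cos α : ℝ) : ℂ) * N) * (G α : ℂ))
      = Complex.I * (G 0 : ℂ) + Complex.I * ∫ α in (0:ℝ)..(π/2), Complex.exp (Complex.I * ((1 - cos α : ℝ) : ℂ) * N) * (D α : ℂ) := by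
  have hGc : Continuous G := continuous_iff_continuousAt.2 fun α => (hG α).continuousAt
  have hint : ∀ a b : ℝ, IntervalIntegrable (fun α : ℝ => (sin α : ℂ) * ((N : ℂ) * Complex.exp (Complex.I * ((1 - cos α : ℝ) : ℂ) * N) * (G α : ℂ))) volume a b :=
    fun a b => Continuous.intervalIntegrable (by fun_prop) a b
  rw [← intervalIntegral.integral_add_adjacent_intervals (hint 0 (π/2)) (hint (π/2) π)]
  have hz : ∫ α in (π/2)..π, (sin α : ℂ) * ((N : ℂ) * Complex.exp (Complex.I * ((1 - cos α : ℝ) : ℂ) * N) * (G α : ℂ)) = 0 := by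
    rw [intervalIntegral.integral_congr (g := fun _ => 0)]
    · simp
    · intro α hα
      rw [Set.uIcc_of_le (by linarith [pi_pos])] at hα
      simp [h0 α hα]
  rw [hz, add_zero]
  have hexp : ∀ x : ℝ, HasDerivAt (fun α : ℝ => Complex.exp (Complex.I * ((1 - cos α : ℝ) : ℂ) * N))
      (Complex.exp (Complex.I * ((1 - cos x : ℝ) : ℂ) * N) * (Complex.I * (sin x : ℂ) * N)) x := by
    intro x
    have h1 : HasDerivAt (fun α : ℝ => 1 - cos α) (sin x) x := by
      simpa using (hasDerivAt_cos x).const_sub 1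
    have h2 := ((h1.ofReal_comp).const_mul Complex.I).mul_const (N : ℂ)
    simpa using h2.cexp
  have ibp := intervalIntegral.integral_mul_deriv_eq_deriv_mul (a := 0) (b := π/2)
    (u := fun α => (G α : ℂ)) (u' := fun α => (D α : ℂ))
    (fun x _ => (hG x).ofReal_comp) (fun x _ => hexp x)
    (Continuous.intervalIntegrable (by fun_prop) _ _) (Continuous.intervalIntegrable (by fun_prop) _ _)
  have e1 : ∫ α in (0:ℝ)..(π/2), (sin α : ℂ) * ((N : ℂ) * Complex.exp (Complex.I * ((1 - cos α : ℝ) : ℂ) * N) * (G α : ℂ))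
    = -Complex.I * ∫ x in (0:ℝ)..(π/2), (G x : ℂ) * (Complex.exp (Complex.I * ((1 - cos x : ℝ) : ℂ) * N) * (Complex.I * (sin x : ℂ) * N)) := by
    rw [← intervalIntegral.integral_const_mul]
    refine intervalIntegral.integral_congr fun x _ => ?_
    linear_combination ((sin x : ℂ) * ((N : ℂ) * Complex.exp (Complex.I * ((1 - cos x : ℝ) : ℂ) * N) * (G x : ℂ))) * Complex.I_mul_I
  rw [e1, ibp, h0 (π/2) ⟨le_rfl, by linarith [pi_pos]⟩]
  simp only [mul_comm (D _ : ℂ)]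
  simp
  ring

/-- stationary phase on `S² ⊂ ℝ³` at `κ = e₁`: for `φ ∈ C¹(S²;ℝ)` supported
in `{q : q·e₁ ≥ 0}`, `(2πi)^{-1} ∫_{S²} N e^{i(1-q·e₁)N} φ(q) dS(q) → φ(e₁)` as `N → ∞`. -/
theorem stationary_phase_sphere_d3
    (e₁ : sphere (0 : EuclideanSpace ℝ (Fin 3)) 1)
    (he₁ : (e₁ : EuclideanSpace ℝ (Fin 3)) = EuclideanSpace.single (0 : Fin 3) (1 : ℝ))
    (φ : sphere (0 : EuclideanSpace ℝ (Fin 3)) 1 → ℝ)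
    (hφC1 : ∃ Φ : EuclideanSpace ℝ (Fin 3) → ℝ, ContDiff ℝ 1 Φ ∧
      ∀ q : sphere (0 : EuclideanSpace ℝ (Fin 3)) 1, Φ (q : EuclideanSpace ℝ (Fin 3)) = φ q)
    (hφsupp : ∀ q : sphere (0 : EuclideanSpace ℝ (Fin 3)) 1,
      ⟪(q : EuclideanSpace ℝ (Fin 3)), (e₁ : EuclideanSpace ℝ (Fin 3))⟫ < 0 → φ q = 0) :
    Filter.Tendsto (fun N : ℝ =>
        (2 * (π : ℂ) * Complex.I)⁻¹ *
          ∫ q : sphere (0 : EuclideanSpace ℝ (Fin 3)) 1,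
            (N : ℂ) *
              Complex.exp (Complex.I *
                ((1 - ⟪(q : EuclideanSpace ℝ (Fin 3)), (e₁ : EuclideanSpace ℝ (Fin 3))⟫ : ℝ) : ℂ) *
                (N : ℂ)) *
              ((φ q : ℝ) : ℂ)
            ∂(Measure.toSphere (volume : Measure (EuclideanSpace ℝ (Fin 3)))))
      Filter.atTop (𝓝 ((φ e₁ : ℝ) : ℂ)) := by
  obtain ⟨Φ, hΦ, hΦφ⟩ := hφC1
  have hinner : ∀ p, ⟪SC p, (e₁ : E3)⟫ = cos p.2 := by
    intro p
    rw [he₁, EuclideanSpace.inner_single_right]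
    simp [SC]
  have hH : ContDiff ℝ 1 (Φ ∘ SC) := hΦ.comp contDiff_SC
  let D : ℝ × ℝ → ℝ := fun p => fderiv ℝ (Φ ∘ SC) p (0, 1)
  have hDc : Continuous D := (hH.continuous_fderiv one_ne_zero).clm_apply continuous_const
  have hder : ∀ w α : ℝ, HasDerivAt (fun α => Φ (SC (w, α))) (D (w, α)) α := by
    intro w α
    have h1 := (hH.differentiable one_ne_zero (w, α)).hasFDerivAt
    exact h1.comp_hasDerivAt α ((hasDerivAt_const α w).prodMk (hasDerivAt_id α))
  have hSC0 : ∀ w, SC (w, 0) = e₁ := by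
    intro w
    rw [he₁]
    ext i
    fin_cases i <;> simp [SC]
  have hzero : ∀ w, ∀ α ∈ Set.Icc (π/2) π, Φ (SC (w, α)) = 0 := by
    intro w
    have hneg : Set.EqOn (fun α => Φ (SC (w, α))) (fun _ => 0) (Set.Ioo (π/2) π) := by
      intro α hα
      have hmem : SC (w, α) ∈ sphere (0:E3) 1 := by simp [norm_SC]
      have := hφsupp ⟨_, hmem⟩ (by
        simp only [hinner]
        exact cos_neg_of_pi_div_two_lt_of_lt hα.1 (by linarith [hα.2, pi_pos]))
      rw [← hΦφ] at this
      exact this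
    have := hneg.closure (hH.continuous.comp (by fun_prop : Continuous fun α : ℝ => (w, α))) continuous_const
    rw [closure_Ioo (by linarith [pi_pos])] at this
    exact this
  have hI : ∀ N : ℝ, ∫ q : sphere (0 : E3) 1, (N : ℂ) * Complex.exp (Complex.I *
                ((1 - ⟪(q : E3), (e₁ : E3)⟫ : ℝ) : ℂ) * (N : ℂ)) * ((φ q : ℝ) : ℂ)
            ∂(Measure.toSphere (volume : Measure E3))
      = ∫ w in (-π)..π, (Complex.I * (φ e₁ : ℂ) + Complex.I * ∫ α in (0:ℝ)..(π/2), Complex.exp (Complex.I * ((1 - cos α : ℝ) : ℂ) * N) * (D (w, α) : ℂ)) := by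
    intro N
    simp_rw [← hΦφ]
    have hΦc := hΦ.continuous
    rw [integral_toSphere (fun x => (N : ℂ) * Complex.exp (Complex.I *
                ((1 - ⟪x, (e₁ : E3)⟫ : ℝ) : ℂ) * (N : ℂ)) * ((Φ x : ℝ) : ℂ)) (by fun_prop)]
    refine intervalIntegral.integral_congr fun w _ => ?_
    simp only [hinner]
    rw [by_parts (fun α => Φ (SC (w, α))) (fun α => D (w, α)) (hder w) (by fun_prop) (hzero w) N, hSC0]
  simp_rw [hI]
  obtain ⟨C, hC⟩ := (isCompact_Icc (a := -π) (b := π)).prod (isCompact_Icc (a := (0:ℝ)) (b := π/2))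
    |>.exists_bound_of_continuousOn hDc.continuousOn
  have hlim : Tendsto (fun N : ℝ => ∫ w in (-π)..π, (Complex.I * (φ e₁ : ℂ) + Complex.I * ∫ α in (0:ℝ)..(π/2), Complex.exp (Complex.I * ((1 - cos α : ℝ) : ℂ) * N) * (D (w, α) : ℂ))) atTop
      (𝓝 (∫ w in (-π)..π, Complex.I * (φ e₁ : ℂ))) := by
    refine intervalIntegral.tendsto_integral_filter_of_dominated_convergence
      (fun _ => |φ e₁| + C * (π/2)) ?_ ?_ (by simp) ?_
    · refine Eventually.of_forall fun N => Continuous.aestronglyMeasurable ?_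
      refine continuous_const.add (continuous_const.mul ?_)
      exact intervalIntegral.continuous_parametric_intervalIntegral_of_continuous'
        (f := fun w α => Complex.exp (Complex.I * ((1 - cos α : ℝ) : ℂ) * N) * (D (w, α) : ℂ))
        (by unfold Function.uncurry; fun_prop) _ _
    · refine Eventually.of_forall fun N => Eventually.of_forall fun w hw => ?_
      rw [Set.uIoc_of_le (by linarith [pi_pos])] at hw
      refine (norm_add_le _ _).trans (add_le_add (by simp) ?_)
      rw [norm_mul, Complex.norm_I, one_mul]
      have := intervalIntegral.norm_integral_le_of_norm_le_const (a := 0) (b := π/2) (C := C)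
        (f := fun α => Complex.exp (Complex.I * ((1 - cos α : ℝ) : ℂ) * N) * (D (w, α) : ℂ)) (by
          intro α hα
          rw [Set.uIoc_of_le (by positivity)] at hα
          rw [show Complex.I * ((1 - cos α : ℝ) : ℂ) * N = (((1 - cos α) * N : ℝ) : ℂ) * Complex.I by push_cast; ring, norm_mul, Complex.norm_exp_ofReal_mul_I, one_mul, Complex.norm_real]
          exact hC (w, α) ⟨⟨hw.1.le, hw.2⟩, ⟨hα.1.le, hα.2⟩⟩)
      rwa [sub_zero, abs_of_pos (by positivity)] at this
    · refine Eventually.of_forall fun w _ => ?_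
      simpa using (RL_cos (fun α => (D (w, α) : ℂ))).const_mul Complex.I |>.const_add (Complex.I * (φ e₁ : ℂ))
  have := hlim.const_mul (2 * (π : ℂ) * Complex.I)⁻¹
  convert this using 2
  rw [intervalIntegral.integral_const, Complex.real_smul]
  have : (π : ℂ) ≠ 0 := by exact_mod_cast pi_ne_zero
  have := Complex.I_ne_zero
  push_cast
  field_simp
  ring

end
end

section
/- Let κ = e₁ ∈ S¹ and let φ ∈ C¹(S¹; ℝ) be supported in {q ∈ S¹ : q·e₁ ≥ 0}. Then (2πi)^{-1/2} ∫_{S¹} N^{1/2} e^{i(1 − q·e₁)N} φ(q) dS(q) → φ(e₁) as N → ∞. -/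
open MeasureTheory Real Filter Metric
open scoped RealInnerProductSpace Topology

noncomputable section

theorem sphere_integral_aux (f : EuclideanSpace ℝ (Fin 2) → ℂ) :
    ∫ q : sphere (0 : EuclideanSpace ℝ (Fin 2)) 1, f q
      ∂(Measure.toSphere (volume : Measure (EuclideanSpace ℝ (Fin 2)))) =
    ∫ θ in Set.Ioo (-π) π, f !₂[Real.cos θ, Real.sin θ] := by
  set μ : Measure (EuclideanSpace ℝ (Fin 2)) := volume with hμ
  set c : ℝ → ℂ := fun r => if r < 1 then 1 else 0 with hc
  set F : EuclideanSpace ℝ (Fin 2) → ℂ := fun x => f (‖x‖⁻¹ • x) * c ‖x‖ with hF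
  have hK : ∫ r in Set.Ioi (0:ℝ), (r : ℂ) * c r = 1 / 2 := by
    have h1 : ∀ r : ℝ, (r : ℂ) * c r = (Set.Iio (1:ℝ)).indicator (fun r : ℝ => (r : ℂ)) r := by
      intro r
      by_cases h : r < 1 <;> simp [hc, h]
    simp_rw [h1]
    rw [setIntegral_indicator measurableSet_Iio, Set.Ioi_inter_Iio,
      ← integral_Ioc_eq_integral_Ioo, ← intervalIntegral.integral_of_le zero_le_one,
      intervalIntegral.integral_ofReal]
    simp
  have h1 : ∫ x, F x ∂μ = (∫ q, f q ∂μ.toSphere) * (1 / 2) := by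
    calc
      ∫ x, F x ∂μ = ∫ x : ({(0)}ᶜ : Set (EuclideanSpace ℝ (Fin 2))), F x ∂(μ.comap (↑)) := by
        rw [integral_subtype_comap (measurableSet_singleton _).compl fun x ↦ F x,
          restrict_compl_singleton]
      _ = ∫ x : sphere (0 : EuclideanSpace ℝ (Fin 2)) 1 × Set.Ioi (0:ℝ), f x.1 * c x.2
            ∂μ.toSphere.prod (.volumeIoiPow (Module.finrank ℝ (EuclideanSpace ℝ (Fin 2)) - 1)) := by
        rw [← μ.measurePreserving_homeomorphUnitSphereProd.integral_comp
          (Homeomorph.measurableEmbedding _)]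
        simp [hF]
      _ = (∫ q, f q ∂μ.toSphere) * ∫ r : Set.Ioi (0:ℝ), c r ∂.volumeIoiPow
            (Module.finrank ℝ (EuclideanSpace ℝ (Fin 2)) - 1) :=
        integral_prod_mul (fun q : sphere (0 : EuclideanSpace ℝ (Fin 2)) 1 => f q)
          (fun r : Set.Ioi (0:ℝ) => c r)
      _ = _ := by
        congr 1
        rw [← hK]
        simp only [Measure.volumeIoiPow, ENNReal.ofReal]
        rw [integral_withDensity_eq_integral_smul,
          integral_subtype_comap measurableSet_Ioi fun a ↦ Real.toNNReal (a ^ (_ - 1)) • c a,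
          setIntegral_congr_fun measurableSet_Ioi fun x hx ↦ ?_]
        · simp only [NNReal.smul_def]
          rw [Real.coe_toNNReal _ (pow_nonneg (le_of_lt hx) _)]
          simp
        · exact (measurable_subtype_coe.pow_const _).real_toNNReal
  have h2 : ∫ x, F x ∂μ = (1 / 2) * ∫ θ in Set.Ioo (-π) π, f !₂[Real.cos θ, Real.sin θ] := by
    have e1 : ∫ x, F x ∂μ = ∫ p : ℝ × ℝ, F !₂[p.1, p.2] := by
      rw [← (PiLp.volume_preserving_toLp (Fin 2)).integral_comp
        (MeasurableEquiv.toLp 2 (Fin 2 → ℝ)).measurableEmbedding,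
        ← ((volume_preserving_finTwoArrow ℝ).symm).integral_comp
          (MeasurableEquiv.measurableEmbedding _)]
      rfl
    rw [e1, ← integral_comp_polarCoord_symm, ← hK, polarCoord_target, Measure.volume_eq_prod,
      ← setIntegral_prod_mul]
    refine setIntegral_congr_fun (measurableSet_Ioi.prod measurableSet_Ioo) ?_
    rintro ⟨r, θ⟩ ⟨hr, -⟩
    have hr : 0 < r := hr
    have hn : ‖(!₂[r * Real.cos θ, r * Real.sin θ] : EuclideanSpace ℝ (Fin 2))‖ = r := by
      rw [EuclideanSpace.norm_eq, Real.sqrt_eq_iff_mul_self_eq (by positivity) hr.le]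
      simp
      nlinarith [Real.sin_sq_add_cos_sq θ]
    have hv : r⁻¹ • (!₂[r * Real.cos θ, r * Real.sin θ] : EuclideanSpace ℝ (Fin 2))
        = !₂[Real.cos θ, Real.sin θ] := by
      ext i
      fin_cases i <;> simp [hr.ne']
    simp only [hF, polarCoord_symm_apply, hn, hv]
    rw [Complex.real_smul]
    ring
  rw [h1] at h2
  have := congrArg (fun z => 2 * z) h2
  linear_combination this

theorem fresnel_aux : ∃ W : ℂ → ℂ, (∀ z, HasDerivAt W (Complex.exp (Complex.I * z ^ 2 / 2)) z) ∧
    W 0 = 0 ∧ Tendsto (fun x : ℝ => W x) atTop (𝓝 ((1 + Complex.I) * (√π / 2 : ℝ))) := by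
  have hd : Differentiable ℂ (fun z : ℂ => Complex.exp (Complex.I * z ^ 2 / 2)) := by fun_prop
  obtain ⟨W, hW0, hW⟩ := hd.isExactOn_univ.with_val_at 0 0
  have hW : ∀ z, HasDerivAt W (Complex.exp (Complex.I * z ^ 2 / 2)) z := by
    first | exact fun z => hW z (Set.mem_univ z) | exact fun z => hW0 z (Set.mem_univ z)
  have hW0 : W 0 = 0 := by assumption
  refine ⟨W, hW, hW0, ?_⟩
  have hA : ∀ x : ℝ, W (x * (1 + Complex.I)) =
      (1 + Complex.I) * ((∫ s in (0:ℝ)..x, Real.exp (-1 * s ^ 2) : ℝ) : ℂ) := by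
    intro x
    have key : ∀ s : ℝ, HasDerivAt (fun s : ℝ => W (s * (1 + Complex.I)))
        ((1 + Complex.I) * ((Real.exp (-1 * s ^ 2) : ℝ) : ℂ)) s := by
      intro s
      have h0 : HasDerivAt (fun s : ℝ => (s : ℂ) * (1 + Complex.I)) (1 + Complex.I) s := by
        simpa using (Complex.ofRealCLM.hasDerivAt (x := s)).mul_const (1 + Complex.I)
      have := (hW ((s:ℂ) * (1 + Complex.I))).comp s h0
      refine this.congr_deriv ?_
      rw [mul_comm]
      congr 1
      push_cast
      congr 1
      linear_combination ((s:ℂ)^2 + Complex.I * s^2/2) * Complex.I_sq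
    have := intervalIntegral.integral_eq_sub_of_hasDerivAt (fun s _ => key s)
      (Continuous.intervalIntegrable (by fun_prop) 0 x)
    rw [intervalIntegral.integral_const_mul, intervalIntegral.integral_ofReal] at this
    rw [this]
    simp [hW0]
  have hB : ∀ x : ℝ, 0 < x → ‖W (x * (1 + Complex.I)) - W x‖ ≤ 1 / x := by
    intro x hx
    have key : ∀ y : ℝ, HasDerivAt (fun y : ℝ => W (x + y * Complex.I))
        (Complex.exp (Complex.I * (x + y * Complex.I) ^ 2 / 2) * Complex.I) y := by
      intro y
      have h0 : HasDerivAt (fun y : ℝ => (x : ℂ) + (y : ℂ) * Complex.I) Complex.I y := by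
        simpa using ((Complex.ofRealCLM.hasDerivAt (x := y)).mul_const Complex.I).const_add (x : ℂ)
      exact (hW ((x:ℂ) + y * Complex.I)).comp y h0
    have h1 := intervalIntegral.integral_eq_sub_of_hasDerivAt (fun s _ => key s)
      (Continuous.intervalIntegrable (by fun_prop) 0 x)
    have h2 : W (x * (1 + Complex.I)) - W x = ∫ y in (0:ℝ)..x,
        Complex.exp (Complex.I * (x + y * Complex.I) ^ 2 / 2) * Complex.I := by
      rw [h1]; simp; ring_nf
    have hn : ∀ y : ℝ, ‖Complex.exp (Complex.I * (x + y * Complex.I) ^ 2 / 2) * Complex.I‖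
        = Real.exp (-x * y) := by
      intro y
      rw [norm_mul, Complex.norm_exp, Complex.norm_I, mul_one]
      congr 1
      have : Complex.I * (x + y * Complex.I) ^ 2 / 2 =
        ((-x * y : ℝ) : ℂ) + (((x^2-y^2)/2 : ℝ) : ℂ) * Complex.I := by
        push_cast
        linear_combination (x * y + Complex.I * y^2/2) * Complex.I_sq
      rw [this, Complex.add_re, Complex.re_ofReal_mul, Complex.I_re, Complex.ofReal_re]
      ring
    rw [h2]
    refine (intervalIntegral.norm_integral_le_integral_norm hx.le).trans ?_
    simp_rw [hn]
    have h3 : ∀ y : ℝ, HasDerivAt (fun y : ℝ => -(1/x) * Real.exp (-x * y)) (Real.exp (-x*y)) y := by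
      intro y
      have := ((((hasDerivAt_id y).const_mul (-x)).exp).const_mul (-(1/x)))
      refine this.congr_deriv ?_
      simp only [id, mul_one]
      field_simp
    rw [intervalIntegral.integral_eq_sub_of_hasDerivAt (fun s _ => h3 s)
      (Continuous.intervalIntegrable (by fun_prop) 0 x)]
    have : 0 ≤ 1 / x * Real.exp (-x * x) := by positivity
    simp at this ⊢
    linarith
  have hC : Tendsto (fun x : ℝ => W (x * (1 + Complex.I)) - W x) atTop (𝓝 0) := by
    apply squeeze_zero_norm' (a := fun x : ℝ => 1 / x)
    · filter_upwards [eventually_gt_atTop 0] with x hx using hB x hx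
    · simpa using tendsto_inv_atTop_zero
  have hD : Tendsto (fun x : ℝ => ∫ s in (0:ℝ)..x, Real.exp (-1 * s ^ 2)) atTop (𝓝 (√π / 2)) := by
    have := intervalIntegral_tendsto_integral_Ioi (μ := volume) 0
      ((integrable_exp_neg_mul_sq (b := 1) one_pos).integrableOn) tendsto_id
    rw [integral_gaussian_Ioi] at this
    simpa using this
  have hE : Tendsto (fun x : ℝ => W (x * (1 + Complex.I))) atTop
      (𝓝 ((1 + Complex.I) * (√π / 2 : ℝ))) := by
    simp_rw [hA]
    exact ((Complex.continuous_ofReal.tendsto _).comp hD).const_mul _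
  simpa using hE.sub hC

theorem half_aux (W : ℂ → ℂ) (L : ℂ)
    (hW : ∀ z, HasDerivAt W (Complex.exp (Complex.I * z ^ 2 / 2)) z) (hW0 : W 0 = 0)
    (hL : Tendsto (fun x : ℝ => W x) atTop (𝓝 L)) (g : ℝ → ℂ) (hg : ContDiff ℝ 1 g) :
    Tendsto (fun N : ℝ => ∫ θ in (0:ℝ)..(π/2), ((√N : ℝ) : ℂ) *
      Complex.exp (Complex.I * ((1 - Real.cos θ : ℝ) : ℂ) * (N : ℂ)) * g θ) atTop (𝓝 (L * g 0)) := by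
  have hWc : Continuous W := continuous_iff_continuousAt.2 fun z => (hW z).continuousAt
  -- bound
  obtain ⟨C, hC⟩ : ∃ C : ℝ, ∀ x : ℝ, 0 ≤ x → ‖W x‖ ≤ C := by
    have h1 : ∀ᶠ x : ℝ in atTop, ‖W x‖ < ‖L‖ + 1 :=
      hL.norm.eventually (gt_mem_nhds (by linarith))
    obtain ⟨M, hM⟩ := eventually_atTop.1 h1
    obtain ⟨C, hC⟩ := (isCompact_Icc (a := (0:ℝ)) (b := M)).exists_bound_of_continuousOn
      (f := fun x : ℝ => W x) (by fun_prop)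
    refine ⟨max C (‖L‖ + 1), fun x hx => ?_⟩
    rcases le_total x M with h | h
    · exact (hC x ⟨hx, h⟩).trans (le_max_left _ _)
    · exact (hM x h).le.trans (le_max_right _ _)
  have hpi : (0:ℝ) ≤ π / 2 := by positivity
  have hu : Set.uIcc (0:ℝ) (π/2) = Set.Icc 0 (π/2) := Set.uIcc_of_le hpi
  have hcos : ∀ θ ∈ Set.Icc (0:ℝ) (π/2), 0 < Real.cos (θ/2) := fun θ hθ =>
    Real.cos_pos_of_mem_Ioo ⟨by linarith [hθ.1, Real.pi_pos], by linarith [hθ.2, Real.pi_pos]⟩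
  set v : ℝ → ℂ := fun θ => g θ / ((Real.cos (θ/2) : ℝ) : ℂ) with hv
  set v' : ℝ → ℂ := fun θ => (deriv g θ * ((Real.cos (θ/2) : ℝ) : ℂ) -
    g θ * ((-Real.sin (θ/2) * (1/2) : ℝ) : ℂ)) / ((Real.cos (θ/2) : ℝ) : ℂ) ^ 2 with hv'
  have hvd : ∀ θ ∈ Set.Icc (0:ℝ) (π/2), HasDerivAt v (v' θ) θ := by
    intro θ hθ
    have h1 : HasDerivAt g (deriv g θ) θ := (hg.differentiable (by simp) θ).hasDerivAt
    have h2 : HasDerivAt (fun θ : ℝ => ((Real.cos (θ/2) : ℝ) : ℂ))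
        ((-Real.sin (θ/2) * (1/2) : ℝ) : ℂ) θ :=
      (((hasDerivAt_id θ).div_const 2).cos).ofReal_comp
    exact h1.div h2 (by exact_mod_cast (hcos θ hθ).ne')
  have hgc : Continuous g := hg.continuous
  have hg'c : Continuous (deriv g) := hg.continuous_deriv (by simp)
  have hv'c : ContinuousOn v' (Set.Icc (0:ℝ) (π/2)) := by
    apply ContinuousOn.div
    · fun_prop
    · fun_prop
    · intro θ hθ
      have := (hcos θ hθ).ne'
      exact pow_ne_zero _ (by exact_mod_cast this)
  have hv'i : IntervalIntegrable v' volume 0 (π/2) := by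
    apply ContinuousOn.intervalIntegrable
    rwa [hu]
  have hparts : ∀ N : ℝ, 0 ≤ N → ∫ θ in (0:ℝ)..(π/2), ((√N : ℝ) : ℂ) *
      Complex.exp (Complex.I * ((1 - Real.cos θ : ℝ) : ℂ) * (N : ℂ)) * g θ =
      W ((√N * (2 * Real.sin (π/2/2)) : ℝ)) * v (π/2) -
        ∫ θ in (0:ℝ)..(π/2), W ((√N * (2 * Real.sin (θ/2)) : ℝ)) * v' θ := by
    intro N hN
    have hG : ∀ θ : ℝ, HasDerivAt (fun θ : ℝ => W ((√N * (2 * Real.sin (θ/2)) : ℝ)))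
        (Complex.exp (Complex.I * ((√N * (2 * Real.sin (θ/2)) : ℝ) : ℂ) ^ 2 / 2) *
          ((√N * Real.cos (θ/2) : ℝ) : ℂ)) θ := by
      intro θ
      have h2 : HasDerivAt (fun θ : ℝ => ((√N * (2 * Real.sin (θ/2)) : ℝ) : ℂ))
          ((√N * Real.cos (θ/2) : ℝ) : ℂ) θ := by
        have := ((((((hasDerivAt_id θ).div_const 2).sin).const_mul 2).const_mul (√N))).ofReal_comp
        refine this.congr_deriv ?_
        simp only [id]
        congr 1
        ring
      exact (hW _).comp θ h2
    have h := intervalIntegral.integral_mul_deriv_eq_deriv_mul (a := 0) (b := π/2)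
      (fun θ hθ => hvd θ (hu ▸ hθ)) (fun θ _ => hG θ) hv'i
      (Continuous.intervalIntegrable (by fun_prop) _ _)
    have e0 : W ((√N * (2 * Real.sin (0/2)) : ℝ)) = 0 := by simp [hW0]
    rw [e0, mul_zero, sub_zero] at h
    rw [mul_comm (W _) (v _)]
    simp_rw [mul_comm (W _) (v' _)]
    rw [← h]
    refine intervalIntegral.integral_congr fun θ hθ => ?_
    rw [hu] at hθ
    have hc : ((Real.cos (θ/2) : ℝ) : ℂ) ≠ 0 := by exact_mod_cast (hcos θ hθ).ne'
    have e1 : Complex.I * ((√N * (2 * Real.sin (θ/2)) : ℝ) : ℂ) ^ 2 / 2 =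
        Complex.I * ((1 - Real.cos θ : ℝ) : ℂ) * (N : ℂ) := by
      have : (√N * (2 * Real.sin (θ/2))) ^ 2 = 2 * ((1 - Real.cos θ) * N) := by
        rw [mul_pow, Real.sq_sqrt hN]
        have h3 : Real.cos θ = 1 - 2 * Real.sin (θ/2) ^ 2 := by
          have := Real.cos_two_mul (θ/2)
          rw [show 2 * (θ/2) = θ by ring] at this
          nlinarith [Real.sin_sq_add_cos_sq (θ/2)]
        rw [h3]; ring
      rw [← Complex.ofReal_pow, this]
      push_cast
      ring
    simp only [e1, hv]
    rw [Complex.ofReal_mul]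
    field_simp
  have hlim : ∀ θ ∈ Set.Ioc (0:ℝ) (π/2), Tendsto (fun N : ℝ => W ((√N * (2 * Real.sin (θ/2)) : ℝ)))
      atTop (𝓝 L) := by
    intro θ hθ
    have hs : 0 < Real.sin (θ/2) := Real.sin_pos_of_pos_of_lt_pi (by linarith [hθ.1])
      (by linarith [hθ.2, Real.pi_pos])
    have : Tendsto (fun N : ℝ => √N * (2 * Real.sin (θ/2))) atTop atTop :=
      Real.tendsto_sqrt_atTop.atTop_mul_const (by positivity)
    exact hL.comp this
  have hI : Tendsto (fun N : ℝ => ∫ θ in (0:ℝ)..(π/2), W ((√N * (2 * Real.sin (θ/2)) : ℝ)) * v' θ)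
      atTop (𝓝 (∫ θ in (0:ℝ)..(π/2), L * v' θ)) := by
    apply intervalIntegral.tendsto_integral_filter_of_dominated_convergence (fun θ => C * ‖v' θ‖)
    · refine Eventually.of_forall fun N => ?_
      apply AEStronglyMeasurable.mul
      · exact Continuous.aestronglyMeasurable (by fun_prop)
      · rw [Set.uIoc_of_le hpi]
        exact hv'i.1.aestronglyMeasurable
    · refine Eventually.of_forall fun N => Eventually.of_forall fun θ hθ => ?_
      rw [Set.uIoc_of_le hpi] at hθ
      rw [norm_mul]
      have hs : 0 ≤ Real.sin (θ/2) := Real.sin_nonneg_of_nonneg_of_le_pi (by linarith [hθ.1])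
        (by linarith [hθ.2, Real.pi_pos])
      gcongr
      exact hC _ (by positivity)
    · exact hv'i.norm.const_mul C
    · refine Eventually.of_forall fun θ hθ => ?_
      rw [Set.uIoc_of_le hpi] at hθ
      exact (hlim θ hθ).mul_const _
  have hfin := ((hlim (π/2) ⟨by positivity, le_rfl⟩).mul_const (v (π/2))).sub hI
  rw [intervalIntegral.integral_const_mul, intervalIntegral.integral_eq_sub_of_hasDerivAt
    (fun θ hθ => hvd θ (hu ▸ hθ)) hv'i] at hfin
  have e : L * v (π/2) - L * (v (π/2) - v 0) = L * g 0 := by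
    have : v 0 = g 0 := by simp [hv]
    rw [this]; ring
  rw [e] at hfin
  refine hfin.congr' ?_
  filter_upwards [eventually_ge_atTop 0] with N hN
  exact (hparts N hN).symm

theorem const_aux : (2 * (π : ℂ) * Complex.I) ^ (-(1 : ℂ) / 2) *
    (2 * ((1 + Complex.I) * (√π / 2 : ℝ))) = 1 := by
  set w : ℂ := 2 * ((1 + Complex.I) * (√π / 2 : ℝ)) with hw
  have hpi : 0 < √π := Real.sqrt_pos.2 Real.pi_pos
  have hs : ((√π : ℝ) : ℂ) ^ 2 = π := by
    rw [← Complex.ofReal_pow, Real.sq_sqrt Real.pi_pos.le]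
  have h1 : w ^ 2 = 2 * (π : ℂ) * Complex.I := by
    rw [hw]; push_cast
    linear_combination (1 + Complex.I)^2 * hs + π * Complex.I_sq
  have hre : 0 < w.re := by
    have : w = ((√π : ℝ) : ℂ) + ((√π : ℝ) : ℂ) * Complex.I := by
      rw [hw]; push_cast; ring
    rw [this]
    simpa using hpi
  have h0 : w ≠ 0 := fun h => by simp [h] at hre
  rw [← h1, show -(1:ℂ)/2 = -(2⁻¹) by ring, Complex.cpow_neg, Complex.sq_cpow_two_inv hre]
  exact inv_mul_cancel₀ h0

/-- stationary phase on `S¹ ⊂ ℝ²` at `κ = e₁`: for `φ ∈ C¹(S¹;ℝ)` supported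
in `{q : q·e₁ ≥ 0}`, `(2πi)^{-1/2} ∫_{S¹} N^{1/2} e^{i(1-q·e₁)N} φ(q) dS(q) → φ(e₁)`. -/
theorem stationary_phase_sphere_d2
    (e₁ : sphere (0 : EuclideanSpace ℝ (Fin 2)) 1)
    (he₁ : (e₁ : EuclideanSpace ℝ (Fin 2)) = EuclideanSpace.single (0 : Fin 2) (1 : ℝ))
    (φ : sphere (0 : EuclideanSpace ℝ (Fin 2)) 1 → ℝ)
    (hφC1 : ∃ Φ : EuclideanSpace ℝ (Fin 2) → ℝ, ContDiff ℝ 1 Φ ∧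
      ∀ q : sphere (0 : EuclideanSpace ℝ (Fin 2)) 1, Φ (q : EuclideanSpace ℝ (Fin 2)) = φ q)
    (hφsupp : ∀ q : sphere (0 : EuclideanSpace ℝ (Fin 2)) 1,
      ⟪(q : EuclideanSpace ℝ (Fin 2)), (e₁ : EuclideanSpace ℝ (Fin 2))⟫ < 0 → φ q = 0) :
    Filter.Tendsto (fun N : ℝ =>
        (2 * (π : ℂ) * Complex.I) ^ (-(1 : ℂ) / 2) *
          ∫ q : sphere (0 : EuclideanSpace ℝ (Fin 2)) 1,
            ((N ^ ((1 : ℝ) / 2) : ℝ) : ℂ) *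
              Complex.exp (Complex.I *
                ((1 - ⟪(q : EuclideanSpace ℝ (Fin 2)), (e₁ : EuclideanSpace ℝ (Fin 2))⟫ : ℝ) : ℂ) *
                (N : ℂ)) *
              ((φ q : ℝ) : ℂ)
            ∂(Measure.toSphere (volume : Measure (EuclideanSpace ℝ (Fin 2)))))
      Filter.atTop (𝓝 ((φ e₁ : ℝ) : ℂ)) := by
  obtain ⟨Φ, hΦ, hΦφ⟩ := hφC1
  obtain ⟨W, hW, hW0, hL⟩ := fresnel_aux
  set L : ℂ := (1 + Complex.I) * (√π / 2 : ℝ) with hLdef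
  set p : ℝ → EuclideanSpace ℝ (Fin 2) := fun θ => !₂[Real.cos θ, Real.sin θ] with hp
  have hpc : ContDiff ℝ 1 p := by
    rw [contDiff_euclidean]
    intro i
    fin_cases i
    · simpa [hp] using Real.contDiff_cos
    · simpa [hp] using Real.contDiff_sin
  set g : ℝ → ℂ := fun θ => ((Φ (p θ) : ℝ) : ℂ) with hg
  have hgc : ContDiff ℝ 1 g := Complex.ofRealCLM.contDiff.comp (hΦ.comp hpc)
  have hinner : ∀ θ, ⟪p θ, (e₁ : EuclideanSpace ℝ (Fin 2))⟫ = Real.cos θ := by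
    intro θ
    rw [he₁, EuclideanSpace.inner_single_right]
    simp [hp]
  have hps : ∀ θ, p θ ∈ sphere (0 : EuclideanSpace ℝ (Fin 2)) 1 := by
    intro θ
    rw [mem_sphere_zero_iff_norm, EuclideanSpace.norm_eq]
    simp [hp]
  have hg0 : ∀ θ, Real.cos θ < 0 → g θ = 0 := by
    intro θ h
    have h1 := hφsupp ⟨p θ, hps θ⟩ (by rw [← hinner θ] at h; exact h)
    rw [← hΦφ] at h1
    simp only [hg]
    rw [h1, Complex.ofReal_zero]
  have hge : g 0 = ((φ e₁ : ℝ) : ℂ) := by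
    have : p 0 = e₁ := by
      rw [he₁]
      ext i
      fin_cases i <;> simp [hp]
    simp only [hg]
    rw [this, hΦφ]
  have hlim1 := half_aux W L hW hW0 hL g hgc
  have hlim2 := half_aux W L hW hW0 hL (fun θ => g (-θ)) (hgc.comp contDiff_neg)
  have hlim := (hlim1.add hlim2).const_mul ((2 * (π : ℂ) * Complex.I) ^ (-(1 : ℂ) / 2))
  have e : (2 * (π : ℂ) * Complex.I) ^ (-(1 : ℂ) / 2) * (L * g 0 + L * g (-0)) = φ e₁ := by
    rw [neg_zero, hge]
    linear_combination (φ e₁ : ℂ) * const_aux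
  rw [e] at hlim
  refine hlim.congr fun N => ?_
  congr 1
  have hs := sphere_integral_aux (fun x => ((N ^ ((1 : ℝ) / 2) : ℝ) : ℂ) *
              Complex.exp (Complex.I *
                ((1 - ⟪x, (e₁ : EuclideanSpace ℝ (Fin 2))⟫ : ℝ) : ℂ) *
                (N : ℂ)) *
              ((Φ x : ℝ) : ℂ))
  simp only [hΦφ] at hs
  rw [hs]
  set k : ℝ → ℂ := fun θ => ((√N : ℝ) : ℂ) *
      Complex.exp (Complex.I * ((1 - Real.cos θ : ℝ) : ℂ) * (N : ℂ)) * g θ with hk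
  have hgcont : Continuous g := hgc.continuous
  have hkc : Continuous k := by fun_prop
  have hpi := Real.pi_pos
  have e1 : ∫ θ in (0:ℝ)..(π/2), ((√N : ℝ) : ℂ) *
      Complex.exp (Complex.I * ((1 - Real.cos θ : ℝ) : ℂ) * (N : ℂ)) * g (-θ) =
      ∫ θ in (-(π/2))..0, k θ := by
    have := intervalIntegral.integral_comp_neg (a := 0) (b := π/2) k
    rw [neg_zero] at this
    rw [← this]
    simp only [hk, Real.cos_neg]
  rw [e1, add_comm, intervalIntegral.integral_add_adjacent_intervals
    (hkc.intervalIntegrable _ _) (hkc.intervalIntegrable _ _),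
    intervalIntegral.integral_of_le (by linarith), ← integral_Icc_eq_integral_Ioc]
  have e2 : ∀ θ, ((N ^ ((1 : ℝ) / 2) : ℝ) : ℂ) *
              Complex.exp (Complex.I *
                ((1 - ⟪p θ, (e₁ : EuclideanSpace ℝ (Fin 2))⟫ : ℝ) : ℂ) *
                (N : ℂ)) *
              ((Φ (p θ) : ℝ) : ℂ) = k θ := by
    intro θ
    rw [hinner, ← Real.sqrt_eq_rpow]
  refine Eq.trans ?_ (setIntegral_congr_fun measurableSet_Ioo fun θ _ => (e2 θ).symm)
  symm
  apply setIntegral_eq_of_subset_of_forall_sdiff_eq_zero measurableSet_Ioo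
  · intro θ hθ
    exact ⟨by linarith [hθ.1], by linarith [hθ.2]⟩
  · rintro θ ⟨h1, h2⟩
    have : Real.cos θ < 0 := by
      rw [Set.mem_Icc, not_and_or, not_le, not_le] at h2
      rcases h2 with h2 | h2
      · rw [← Real.cos_neg]
        exact Real.cos_neg_of_pi_div_two_lt_of_lt (by linarith) (by linarith [h1.1])
      · exact Real.cos_neg_of_pi_div_two_lt_of_lt h2 (by linarith [h1.2])
    simp [hk, hg0 θ this]

end
end
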